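/- Let H be a real Hilbert space, let C : H →L H be a continuous linear operator that is coercive, i.e., there is α > 0 with ⟨C v, v⟩ ≥ α‖v‖² for all v ∈ H, and let K : H →L H be a compact operator. Set B = C + K and let B† denote the Hilbert-space adjoint of B. Then the following six statements are equivalent: (1) B is injective; (2) there exists c > 0 such that ‖v‖ ≤ c‖B v‖ for all v ∈ H; (3) B is bijective; (4) B† is injective; (5) there exists c > 0 such that ‖v‖ ≤ c‖B† v‖ for all v ∈ H; (6) B† is bijective. -/

import Mathlib

open RealInnerProductSpace

/-! If `C` is invertible, then `C + K = C ∘ (1 + C⁻¹K)` with `C⁻¹K` compact, so the Riesz–Schauder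
alternative makes an injective `C + K` bijective, hence bounded below. The same applies to the
adjoint `C† + K†`, since `K†` is again compact by `‖K†x‖² ≤ ‖KK†x‖ ‖x‖`, and an operator is
invertible if and only if its adjoint is. A coercive operator is invertible by Lax–Milgram. -/

section TotallyBounded

open Metric

variable {X Y Z : Type*} [PseudoMetricSpace Y] [PseudoMetricSpace Z]

theorem totallyBounded_image_of_dist_lt {f : X → Y} {g : X → Z} {s : Set X}
    (hg : TotallyBounded (g '' s))
    (hfg : ∀ ε > 0, ∃ δ > 0, ∀ x ∈ s, ∀ y ∈ s, dist (g x) (g y) < δ → dist (f x) (f y) < ε) :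
    TotallyBounded (f '' s) := by
  rw [totallyBounded_iff]
  intro ε hε
  obtain ⟨δ, hδ, hdist⟩ := hfg ε hε
  obtain ⟨t, hts, ht, hcover⟩ := Set.exists_subset_image_finite_and.1
    (finite_approx_of_totallyBounded hg δ hδ)
  refine ⟨f '' t, ht.image f, ?_⟩
  rintro _ ⟨x, hx, rfl⟩
  obtain ⟨y, hy, hxy⟩ : ∃ y ∈ t, dist (g x) (g y) < δ := by
    simpa using hcover (Set.mem_image_of_mem g hx)
  exact Set.mem_biUnion (Set.mem_image_of_mem f hy) (hdist x hx y (hts hy) hxy)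

end TotallyBounded

section Normed

open Function Metric

variable {𝕜 E F G : Type*} [NontriviallyNormedField 𝕜]
  [NormedAddCommGroup E] [NormedSpace 𝕜 E] [NormedAddCommGroup F] [NormedSpace 𝕜 F]
  [NormedAddCommGroup G] [NormedSpace 𝕜 G]

theorem isCompactOperator_of_sq_norm_le [CompleteSpace F] {A : E →L[𝕜] F} {T : E →L[𝕜] G}
    (hT : IsCompactOperator T) (hAT : ∀ x, ‖A x‖ ^ 2 ≤ ‖T x‖ * ‖x‖) : IsCompactOperator A := by
  have hT_bdd : TotallyBounded (T '' closedBall 0 1) := by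
    have hT' : IsCompactOperator T.toLinearMap := hT
    obtain ⟨L, hL, hTL⟩ := hT'.image_closedBall_subset_compact 1
    exact hL.totallyBounded.subset hTL
  have hA_bdd : TotallyBounded (A '' closedBall 0 1) := by
    refine totallyBounded_image_of_dist_lt hT_bdd fun ε hε ↦
      ⟨ε ^ 2 / 2, by positivity, fun x hx y hy hxy ↦ ?_⟩
    rw [mem_closedBall_zero_iff] at hx hy
    rw [dist_eq_norm, ← map_sub] at hxy ⊢
    have hdiam : ‖x - y‖ ≤ 2 := by linarith [norm_sub_le x y]
    refine lt_of_pow_lt_pow_left₀ 2 hε.le ?_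
    calc ‖A (x - y)‖ ^ 2 ≤ ‖T (x - y)‖ * ‖x - y‖ := hAT _
      _ ≤ ‖T (x - y)‖ * 2 := by gcongr
      _ < ε ^ 2 := by linarith
  exact (isCompactOperator_iff_isCompact_closure_image_closedBall A.toLinearMap one_pos).2
    (hA_bdd.closure.isCompact_of_isClosed isClosed_closure)

theorem exists_antilipschitzWith_iff_exists_norm_le_mul {A : E →L[𝕜] F} :
    (∃ K, AntilipschitzWith K A) ↔ ∃ c > (0 : ℝ), ∀ v, ‖v‖ ≤ c * ‖A v‖ := by
  rw [antilipschitzWith_iff_exists_mul_le_norm]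
  constructor
  · rintro ⟨c, hc, hA⟩
    exact ⟨c⁻¹, inv_pos.2 hc, fun v ↦ (le_inv_mul_iff₀ hc).2 (hA v)⟩
  · rintro ⟨c, hc, hA⟩
    exact ⟨c⁻¹, inv_pos.2 hc, fun v ↦ (inv_mul_le_iff₀ hc).2 (hA v)⟩

theorem bijective_one_add_of_isCompactOperator [CompleteSpace E] {T : E →L[𝕜] E}
    (hT : IsCompactOperator T) (hinj : Injective ⇑(1 + T)) : Bijective ⇑(1 + T) := by
  have hneg : IsCompactOperator (-T) := hT.neg
  rcases hneg.hasEigenvalue_or_mem_resolventSet one_ne_zero with heig | hres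
  · obtain ⟨v, hv⟩ := heig.exists_hasEigenvector
    have hfix : -T v = v := by simpa using hv.apply_eq_smul
    have hker : (1 + T) v = 0 := by simp [neg_eq_iff_eq_neg.1 hfix]
    exact absurd ((map_eq_zero_iff _ hinj).1 hker) hv.2
  · rw [spectrum.mem_resolventSet_iff, map_one, sub_neg_eq_add] at hres
    exact ContinuousLinearMap.isUnit_iff_bijective.1 hres

theorem bijective_add_of_isInvertible_of_isCompactOperator [CompleteSpace E] {C K : E →L[𝕜] F}
    (hC : C.IsInvertible) (hK : IsCompactOperator K) (hinj : Injective (C + K)) :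
    Bijective (C + K) := by
  obtain ⟨e, rfl⟩ := hC
  set T : E →L[𝕜] E := (e.symm : F →L[𝕜] E) ∘L K
  have hT : IsCompactOperator T := hK.clm_comp (e.symm : F →L[𝕜] E)
  have hfactor : ⇑((e : E →L[𝕜] F) + K) = e ∘ ⇑(1 + T) := by
    ext v
    simp [T]
  rw [hfactor] at hinj ⊢
  exact e.bijective.comp (bijective_one_add_of_isCompactOperator hT hinj.of_comp)

theorem tfae_injective_norm_le_bijective_add [CompleteSpace E] [CompleteSpace F]
    {C K : E →L[𝕜] F} (hC : C.IsInvertible) (hK : IsCompactOperator K) :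
    List.TFAE
      [ Injective (C + K),
        ∃ c > (0 : ℝ), ∀ v, ‖v‖ ≤ c * ‖(C + K) v‖,
        Bijective (C + K) ] := by
  rw [← exists_antilipschitzWith_iff_exists_norm_le_mul]
  tfae_have 1 → 3 := bijective_add_of_isInvertible_of_isCompactOperator hC hK
  tfae_have 3 → 2 := fun h ↦ ((C + K).bijective_iff_dense_range_and_antilipschitz.1 h).2
  tfae_have 2 → 1 := fun ⟨_, h⟩ ↦ h.injective
  tfae_finish

end Normed

section Hilbert

variable {𝕜 E F : Type*} [RCLike 𝕜]
  [NormedAddCommGroup E] [InnerProductSpace 𝕜 E] [CompleteSpace E]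
  [NormedAddCommGroup F] [InnerProductSpace 𝕜 F] [CompleteSpace F]

open Function
open ContinuousLinearMap (adjoint)
open scoped InnerProductSpace

theorem isCompactOperator_adjoint {K : E →L[𝕜] F} (hK : IsCompactOperator K) :
    IsCompactOperator (adjoint K) := by
  have hKK : IsCompactOperator (K ∘L adjoint K) := hK.comp_clm (adjoint K)
  refine isCompactOperator_of_sq_norm_le hKK fun x ↦ ?_
  calc ‖adjoint K x‖ ^ 2 = RCLike.re ⟪(K ∘L adjoint K) x, x⟫_𝕜 := by
        simpa using (adjoint K).apply_norm_sq_eq_inner_adjoint_left x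
    _ ≤ ‖(K ∘L adjoint K) x‖ * ‖x‖ := re_inner_le_norm _ _

theorem isInvertible_adjoint {A : E →L[𝕜] F} (hA : A.IsInvertible) :
    (adjoint A).IsInvertible :=
  .of_inverse (g := adjoint A.inverse)
    (by rw [← ContinuousLinearMap.adjoint_comp, hA.inverse_comp_self,
      ContinuousLinearMap.adjoint_id])
    (by rw [← ContinuousLinearMap.adjoint_comp, hA.self_comp_inverse,
      ContinuousLinearMap.adjoint_id])

theorem bijective_adjoint_of_bijective {A : E →L[𝕜] F} (hA : Bijective A) :
    Bijective (adjoint A) := by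
  have hinv : A.IsInvertible :=
    ⟨.ofBijective A (LinearMap.ker_eq_bot.2 hA.1) (LinearMap.range_eq_top.2 hA.2), by ext; simp⟩
  exact (isInvertible_adjoint hinv).bijective

theorem bijective_adjoint_iff {A : E →L[𝕜] F} : Bijective (adjoint A) ↔ Bijective A :=
  ⟨fun h ↦ by simpa using bijective_adjoint_of_bijective h, bijective_adjoint_of_bijective⟩

theorem isInvertible_of_coercive {C : E →L[𝕜] E} {α : ℝ} (hα : 0 < α)
    (hcoer : ∀ v, α * ‖v‖ ^ 2 ≤ RCLike.re ⟪C v, v⟫_𝕜) : C.IsInvertible := by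
  obtain ⟨u, hu⟩ := C.isUnit_of_forall_le_norm_inner_map (c := ⟨α, hα.le⟩) hα fun v ↦
    calc ‖v‖ ^ 2 * α = α * ‖v‖ ^ 2 := mul_comm _ _
      _ ≤ RCLike.re ⟪C v, v⟫_𝕜 := hcoer v
      _ ≤ ‖⟪C v, v⟫_𝕜‖ := RCLike.re_le_norm _
  exact ⟨ContinuousLinearEquiv.ofUnit u, hu⟩

theorem fredholm_tfae_general {C K : E →L[𝕜] F} (hC : C.IsInvertible)
    (hK : IsCompactOperator K) :
    List.TFAE
      [ Injective (C + K),
        ∃ c > (0 : ℝ), ∀ v, ‖v‖ ≤ c * ‖(C + K) v‖,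
        Bijective (C + K),
        Injective (adjoint (C + K)),
        ∃ c > (0 : ℝ), ∀ v, ‖v‖ ≤ c * ‖adjoint (C + K) v‖,
        Bijective (adjoint (C + K)) ] := by
  have primal := tfae_injective_norm_le_bijective_add hC hK
  have dual := tfae_injective_norm_le_bijective_add (isInvertible_adjoint hC)
    (isCompactOperator_adjoint hK)
  rw [← map_add] at dual
  tfae_have 1 ↔ 2 := primal.out 0 1
  tfae_have 2 ↔ 3 := primal.out 1 2
  tfae_have 6 ↔ 3 := bijective_adjoint_iff
  tfae_have 4 ↔ 5 := dual.out 0 1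
  tfae_have 5 ↔ 6 := dual.out 1 2
  tfae_finish

end Hilbert

/-- **Fredholm alternative, operator form.**  Let `B = C + K` where `C` is a coercive
continuous linear operator on a real Hilbert space `H` and `K` is a compact operator.
Then injectivity, boundedness below, and bijectivity of `B`, as well as of its
Hilbert-space adjoint `B†`, are all equivalent. -/
theorem fredholm_tfae
    {H : Type*} [NormedAddCommGroup H] [InnerProductSpace ℝ H] [CompleteSpace H]
    (C K : H →L[ℝ] H)
    (α : ℝ) (hα : 0 < α) (hcoer : ∀ v : H, α * ‖v‖ ^ 2 ≤ ⟪C v, v⟫)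
    (hK : IsCompactOperator K) (B : H →L[ℝ] H) (hB : B = C + K) :
    List.TFAE
      [ Function.Injective B,
        ∃ c > (0 : ℝ), ∀ v : H, ‖v‖ ≤ c * ‖B v‖,
        Function.Bijective B,
        Function.Injective (ContinuousLinearMap.adjoint B),
        ∃ c > (0 : ℝ), ∀ v : H, ‖v‖ ≤ c * ‖ContinuousLinearMap.adjoint B v‖,
        Function.Bijective (ContinuousLinearMap.adjoint B) ] := by
  subst hB
  exact fredholm_tfae_general (isInvertible_of_coercive hα hcoer) hK
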